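/- arXiv:2109.00792 — 2 statements merged into one kernel-verified Lean document; each statement's English description precedes it below -/
import Mathlib

section
/- Let G=(V,E) be a finite simple graph with V = {1,…,n}, let b ∈ ℕ, and let K : E → ℕ with K(e) ≤ b for every edge e. If f_{A_G} ∈ W_E^K, then K is sufficient for G, i.e., there exists K' : E → ℕ with K' ≤ K pointwise such that the coefficient of x^{K'} in P_G is nonzero; consequently G is algebraic total weight (1, b+1)-choosable. -/
/-!
The proof uses the apolar (Fischer) pairing `⟨p, q⟩ = ∑_α α! p_α q_α` on polynomials, which is
the value at `0` of `p(∂) q`.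

* Multiplication by `X_v` is adjoint to `∂/∂x_v` (`apolar_mul_X`). With the chain rule this shows
  that the substitutions given by a matrix and by its transpose are adjoint
  (`apolar_linSubst`).
* For the vertex-edge incidence matrix of `G`, one substitution sends `x^{K'}` to
  `∏_e (x_i + x_j)^{K'(e)}` and the transposed one sends `f_{A_G}` to `P_G`. Hence
  `⟨∏_e (x_i + x_j)^{K'(e)}, f_{A_G}⟩` is `∏_e K'(e)!` times the coefficient of `x^{K'}` in `P_G`.
* `f_{A_G}` is a nonzero polynomial with integer coefficients, so `⟨f_{A_G}, f_{A_G}⟩ ≠ 0`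
  (`apolar_self_ne_zero`). If `f_{A_G}` lies in `W_E^K`, some spanning polynomial of `W_E^K`
  therefore pairs nontrivially with `f_{A_G}`, which gives a nonzero coefficient of `P_G` at some
  `K' ≤ K`. Since `P_G` is homogeneous of degree `|E|`, also `∑_e K'(e) = |E|`.
-/

open scoped BigOperators

/-- The polynomial `P_G = ∏_{{i,j} ∈ E, i<j} (Σ_{e ∈ E(i)} x_e − Σ_{e ∈ E(j)} x_e)` in the
variables `{x_e : e ∈ E}`, where `E(v)` is the set of edges incident to `v`.  The endpoints
of an edge `e = {i,j}` with `i < j` are `Sym2.inf e = i` and `Sym2.sup e = j`. -/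
noncomputable def PG {n : ℕ} (G : SimpleGraph (Fin n)) [DecidableRel G.Adj] :
    MvPolynomial (↥G.edgeFinset) ℂ :=
  ∏ e : ↥G.edgeFinset,
    ((∑ e' : ↥G.edgeFinset, if Sym2.inf e.val ∈ e'.val then MvPolynomial.X e' else 0)
      - (∑ e' : ↥G.edgeFinset, if Sym2.sup e.val ∈ e'.val then MvPolynomial.X e' else 0))

/-- `K : E → ℕ` is sufficient for `G` if for some `K' ≤ K` the coefficient of `x^{K'}`
in `P_G` is nonzero. -/
noncomputable def SufficientFor {n : ℕ} (G : SimpleGraph (Fin n)) [DecidableRel G.Adj]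
    (K : ↥G.edgeFinset → ℕ) : Prop :=
  ∃ K' : ↥G.edgeFinset → ℕ, K' ≤ K ∧
    MvPolynomial.coeff (Finsupp.equivFunOnFinite.symm K') (PG G) ≠ 0

/-- The polynomial `f_{A_G} = ∏_{{i,j} ∈ E, i<j} (x_i − x_j)` in the vertex variables. -/
noncomputable def fAG {n : ℕ} (G : SimpleGraph (Fin n)) [DecidableRel G.Adj] :
    MvPolynomial (Fin n) ℂ :=
  ∏ e : ↥G.edgeFinset,
    (MvPolynomial.X (Sym2.inf e.val) - MvPolynomial.X (Sym2.sup e.val))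

/-- `W_E^K`: the complex vector space spanned by the polynomials
`∏_{{i,j} ∈ E, i<j} (x_i + x_j)^{K'(e)}` over all `K' ≤ K`. -/
noncomputable def WEK {n : ℕ} (G : SimpleGraph (Fin n)) [DecidableRel G.Adj]
    (K : ↥G.edgeFinset → ℕ) : Submodule ℂ (MvPolynomial (Fin n) ℂ) :=
  Submodule.span ℂ
    {p | ∃ K' : ↥G.edgeFinset → ℕ, K' ≤ K ∧
      p = ∏ e : ↥G.edgeFinset,
        (MvPolynomial.X (Sym2.inf e.val) + MvPolynomial.X (Sym2.sup e.val)) ^ K' e}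

open MvPolynomial

/-- The apolar (Fischer) bilinear pairing `⟨p, q⟩ = ∑_α α! p_α q_α` (without conjugation), defined
by its values on the monomial basis in the first argument. -/
noncomputable def apolar (σ : Type*) [Fintype σ] :
    MvPolynomial σ ℂ →ₗ[ℂ] MvPolynomial σ ℂ →ₗ[ℂ] ℂ :=
  (basisMonomials σ ℂ).constr ℂ fun α => ((∏ v, (α v).factorial : ℕ) : ℂ) • lcoeff ℂ α

/-- Substitution of the linear forms `∑_t M s t • X_t` for the variables `X_s`. -/
noncomputable def linSubst {σ τ : Type*} [Fintype τ] (M : σ → τ → ℂ) :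
    MvPolynomial σ ℂ →ₐ[ℂ] MvPolynomial τ ℂ :=
  aeval fun s => ∑ t, M s t • X t

section Pairing

variable {σ τ : Type*} [Fintype σ] [Fintype τ]

lemma apolar_monomial (α : σ →₀ ℕ) (a : ℂ) (q : MvPolynomial σ ℂ) :
    apolar σ (monomial α a) q = a * ((∏ v, (α v).factorial : ℕ) : ℂ) * coeff α q := by
  have h : monomial α a = a • basisMonomials σ ℂ α := by
    simp [coe_basisMonomials, smul_monomial]
  rw [h, map_smul, apolar, Module.Basis.constr_basis]
  simp [mul_assoc]

lemma apolar_mul_X (p q : MvPolynomial σ ℂ) (v : σ) :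
    apolar σ (p * X v) q = apolar σ p (pderiv v q) := by
  classical
  induction p using MvPolynomial.induction_on' with
  | add p₁ p₂ h₁ h₂ => simp only [add_mul, map_add, LinearMap.add_apply, h₁, h₂]
  | monomial α a =>
    have hfac : (∏ w, ((α + Finsupp.single v 1 : σ →₀ ℕ) w).factorial)
        = (α v + 1) * ∏ w, (α w).factorial := by
      rw [← Finset.mul_prod_erase _ _ (Finset.mem_univ v),
        ← Finset.mul_prod_erase _ (fun w => (α w).factorial) (Finset.mem_univ v), ← mul_assoc]
      congr 1
      · simp [Nat.factorial_succ]
      · refine Finset.prod_congr rfl fun w hw => ?_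
        simp [(Finset.ne_of_mem_erase hw).symm]
    rw [X, monomial_mul, apolar_monomial, apolar_monomial, coeff_pderiv, hfac]
    push_cast
    ring

lemma pderiv_linSubst (M : σ → τ → ℂ) (q : MvPolynomial σ ℂ) (t : τ) :
    pderiv t (linSubst M q) = linSubst M (∑ s, M s t • pderiv s q) := by
  classical
  induction q using MvPolynomial.induction_on with
  | C a => simp [linSubst]
  | add p q hp hq => simp only [map_add, smul_add, Finset.sum_add_distrib, hp, hq]
  | mul_X p s hp =>
    have hX : pderiv t (linSubst M (X s)) = C (M s t) := by
      simp [linSubst, pderiv_X, Pi.single_apply, smul_eq_C_mul]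
    have hsum : ∑ s', M s' t • pderiv s' (p * X s)
        = (∑ s', M s' t • pderiv s' p) * X s + p * C (M s t) := by
      simp only [pderiv_mul, smul_add, Finset.sum_add_distrib, Finset.sum_mul, smul_mul_assoc]
      congr 1
      simp [pderiv_X, Pi.single_apply, smul_eq_C_mul, mul_comm]
    rw [hsum, map_mul, pderiv_mul, hp, hX, map_add, map_mul, map_mul]
    simp [linSubst]

/-- The substitutions given by a matrix and by its transpose are adjoint for the apolar
pairing. -/
lemma apolar_linSubst (M : σ → τ → ℂ) (p : MvPolynomial τ ℂ) (q : MvPolynomial σ ℂ) :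
    apolar σ (linSubst (fun t s => M s t) p) q = apolar τ p (linSubst M q) := by
  induction p using MvPolynomial.induction_on generalizing q with
  | C a =>
    -- A constant `a` pairs with `q` to `a` times the constant term, which a linear
    -- substitution preserves.
    have h0 : constantCoeff (linSubst M q) = constantCoeff q := by
      induction q using MvPolynomial.induction_on with
      | C a => simp [linSubst]
      | add p q hp hq => simp only [map_add, hp, hq]
      | mul_X p s hp => simp [linSubst, smul_eq_C_mul]
    have h1 : linSubst (fun t s => M s t) (C a) = monomial 0 a := by simp [linSubst]
    rw [h1, show (C a : MvPolynomial τ ℂ) = monomial 0 a from rfl, apolar_monomial,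
      apolar_monomial]
    simpa [constantCoeff_eq] using Or.inl h0.symm
  | add p₁ p₂ h₁ h₂ => simp only [map_add, LinearMap.add_apply, h₁, h₂]
  | mul_X p t hp =>
    have hX : linSubst (fun t s => M s t) (X t) = ∑ s, M s t • X s := by simp [linSubst]
    rw [apolar_mul_X, pderiv_linSubst, ← hp, map_mul, hX, Finset.mul_sum]
    simp only [mul_smul_comm, map_sum, map_smul, LinearMap.sum_apply, LinearMap.smul_apply,
      apolar_mul_X]

/-- The apolar pairing is anisotropic on polynomials with integer coefficients, although not on
all complex polynomials. -/
lemma apolar_self_ne_zero (g : MvPolynomial σ ℤ) (hg : g ≠ 0) :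
    apolar σ (map (Int.castRingHom ℂ) g) (map (Int.castRingHom ℂ) g) ≠ 0 := by
  have hsum : apolar σ (map (Int.castRingHom ℂ) g) (map (Int.castRingHom ℂ) g)
      = ((∑ α ∈ g.support, coeff α g * (∏ v, (α v).factorial : ℕ) * coeff α g : ℤ) : ℂ) := by
    conv_lhs => enter [1, 2]; rw [g.as_sum]
    simp only [map_sum, map_monomial, LinearMap.sum_apply, apolar_monomial, coeff_map]
    push_cast
    rfl
  rw [hsum, Int.cast_ne_zero]
  refine (Finset.sum_pos (fun α hα => ?_) (support_nonempty.mpr hg)).ne'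
  have hc : coeff α g ≠ 0 := mem_support_iff.mp hα
  have hf : (0 : ℤ) < (∏ v, (α v).factorial : ℕ) := by
    exact_mod_cast Finset.prod_pos fun v _ => (α v).factorial_pos
  rw [mul_right_comm]
  exact mul_pos (mul_self_pos.mpr hc) hf

end Pairing

section Graph

variable {n : ℕ} (G : SimpleGraph (Fin n)) [DecidableRel G.Adj]

/-- The vertex-edge incidence matrix of `G`, with columns indexed by `G.edgeFinset`. -/
noncomputable def incidence (v : Fin n) (e : ↥G.edgeFinset) : ℂ := if v ∈ e.val then 1 else 0

lemma inf_ne_sup (e : ↥G.edgeFinset) : Sym2.inf e.val ≠ Sym2.sup e.val := by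
  obtain ⟨e, he⟩ := e
  induction e with
  | _ a b =>
    have hab : a ≠ b := (SimpleGraph.mem_edgeFinset.mp he : G.Adj a b).ne
    simpa using hab

lemma mem_iff_eq_inf_or_eq_sup (e : Sym2 (Fin n)) (v : Fin n) :
    v ∈ e ↔ v = Sym2.inf e ∨ v = Sym2.sup e := by
  induction e with
  | _ a b =>
    rcases le_total a b with h | h <;> simp [h, or_comm]

lemma linSubst_incidence_fAG : linSubst (incidence G) (fAG G) = PG G := by
  simp [linSubst, incidence, fAG, PG]

lemma linSubst_incidence_monomial (K : ↥G.edgeFinset → ℕ) :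
    linSubst (fun e v => incidence G v e) (monomial (Finsupp.equivFunOnFinite.symm K) 1)
      = ∏ e : ↥G.edgeFinset, (X (Sym2.inf e.val) + X (Sym2.sup e.val)) ^ K e := by
  rw [linSubst, aeval_monomial, map_one, one_mul, Finsupp.prod_fintype _ _ (by simp)]
  refine Finset.prod_congr rfl fun e _ => ?_
  have hsplit : ∀ v, incidence G v e • (X v : MvPolynomial (Fin n) ℂ)
      = (if v = Sym2.inf e.val then X v else 0) + if v = Sym2.sup e.val then X v else 0 := by
    intro v
    have hne := inf_ne_sup G e
    simp only [incidence, mem_iff_eq_inf_or_eq_sup]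
    by_cases h₁ : v = Sym2.inf e.val
    · subst h₁
      simp [hne]
    · simp [h₁]
  simp [hsplit, Finset.sum_add_distrib]

lemma apolar_fAG (K : ↥G.edgeFinset → ℕ) :
    apolar (Fin n) (∏ e : ↥G.edgeFinset, (X (Sym2.inf e.val) + X (Sym2.sup e.val)) ^ K e) (fAG G)
      = ((∏ e, (K e).factorial : ℕ) : ℂ)
        * coeff (Finsupp.equivFunOnFinite.symm K) (PG G) := by
  rw [← linSubst_incidence_monomial, apolar_linSubst, linSubst_incidence_fAG, apolar_monomial]
  simp

lemma apolar_fAG_self_ne_zero : apolar (Fin n) (fAG G) (fAG G) ≠ 0 := by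
  have hmap : fAG G = map (Int.castRingHom ℂ)
      (∏ e : ↥G.edgeFinset, (X (Sym2.inf e.val) - X (Sym2.sup e.val))) := by
    simp [fAG]
  rw [hmap]
  refine apolar_self_ne_zero _ (Finset.prod_ne_zero_iff.mpr fun e _ => ?_)
  exact sub_ne_zero.mpr fun h => inf_ne_sup G e (X_injective h)

lemma isHomogeneous_PG : (PG G).IsHomogeneous G.edgeFinset.card := by
  have hlin : ∀ v : Fin n, (∑ e' : ↥G.edgeFinset,
      if v ∈ e'.val then (X e' : MvPolynomial (↥G.edgeFinset) ℂ) else 0).IsHomogeneous 1 := by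
    intro v
    refine IsHomogeneous.sum _ _ _ fun e' _ => ?_
    split_ifs
    · exact isHomogeneous_X _ _
    · exact isHomogeneous_zero _ _ _
  have h := IsHomogeneous.prod Finset.univ _ (fun _ : ↥G.edgeFinset => 1)
    fun e _ => (hlin (Sym2.inf e.val)).sub (hlin (Sym2.sup e.val))
  simpa [PG] using h

lemma sum_eq_card_of_coeff_PG_ne_zero (K : ↥G.edgeFinset → ℕ)
    (hc : coeff (Finsupp.equivFunOnFinite.symm K) (PG G) ≠ 0) :
    ∑ e, K e = G.edgeFinset.card := by
  by_contra hdeg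
  refine hc ((isHomogeneous_PG G).coeff_eq_zero ?_)
  rw [Finsupp.degree_eq_sum]
  exact hdeg

lemma apolar_fAG_eq_zero_of_mem_WEK (K : ↥G.edgeFinset → ℕ)
    (h0 : ∀ K' ≤ K, coeff (Finsupp.equivFunOnFinite.symm K') (PG G) = 0)
    {p : MvPolynomial (Fin n) ℂ} (hp : p ∈ WEK G K) : apolar (Fin n) p (fAG G) = 0 := by
  unfold WEK at hp
  induction hp using Submodule.span_induction with
  | mem p hp =>
    obtain ⟨K', hK, rfl⟩ := hp
    rw [apolar_fAG, h0 K' hK, mul_zero]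
  | zero => rw [map_zero, LinearMap.zero_apply]
  | add p q _ _ hp hq => rw [map_add, LinearMap.add_apply, hp, hq, add_zero]
  | smul a p _ hp => rw [map_smul, LinearMap.smul_apply, hp, smul_zero]

end Graph

/-- If `K(e) ≤ b` for every edge and `f_{A_G} ∈ W_E^K`, then `K` is sufficient for `G`;
consequently `G` is algebraic total weight `(1, b+1)`-choosable, i.e. there is
`K' : E → ℕ` with `Σ_e K' e = |E|`, `K' e ≤ b` for all `e`, and the coefficient of
`x^{K'}` in `P_G` nonzero. -/
theorem sufficient_of_mem_WEK {n b : ℕ} (G : SimpleGraph (Fin n)) [DecidableRel G.Adj]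
    (K : ↥G.edgeFinset → ℕ) (hb : ∀ e, K e ≤ b) (h : fAG G ∈ WEK G K) :
    SufficientFor G K ∧
      ∃ K' : ↥G.edgeFinset → ℕ, (∑ e, K' e) = G.edgeFinset.card ∧ (∀ e, K' e ≤ b) ∧
        MvPolynomial.coeff (Finsupp.equivFunOnFinite.symm K') (PG G) ≠ 0 := by
  have hsuff : SufficientFor G K := by
    by_contra hcon
    -- Otherwise every spanning polynomial of `W_E^K`, hence `f_{A_G}` itself, is orthogonal to
    -- `f_{A_G}`.
    refine apolar_fAG_self_ne_zero G (apolar_fAG_eq_zero_of_mem_WEK G K (fun K' hK => ?_) h)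
    by_contra hc
    exact hcon ⟨K', hK, hc⟩
  refine ⟨hsuff, ?_⟩
  obtain ⟨K', hK, hc⟩ := hsuff
  exact ⟨K', sum_eq_card_of_coeff_PG_ne_zero G K' hc, fun e => (hK e).trans (hb e), hc⟩
end

section
/- Let G=(V,E) be a finite simple graph and let b ∈ ℕ. If G has a path covering family 𝒫 with K_𝒫(e) ≤ b for every edge e, then G is algebraic total weight (1, b+1)-choosable; in particular there exists K' : E → ℕ with K'(e) ≤ b for all e such that the coefficient of x^{K'} in P_G is nonzero. -/
/-!
Let `ι = E`. For a matrix `a : ι → σ → ℚ`, `linProd a` is the product over `e` of the linear forms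
`Σ_f a e f x_f`, so `P_G = linProd a` with `a e f = Σ_v d e v χ_f v`, where
`d e = δ_i - δ_j` for `e = {i, j}`, `i < j`, and `χ_f` is the indicator of the endpoints of `f`.

The alternating sum of the `χ_f` along an even walk from `i` to `j` telescopes to `δ_i - δ_j`.
So there is a matrix `c` with `d e = Σ_f c e f χ_f` and `c e f = 0` unless `f` lies on `P e`
(`exists_coeff_of_walk`). Hence `⟨a e, c e'⟩ = ⟨d e, d e'⟩` for all `e, e'`, and therefore
`per (a cᵀ) = per (d dᵀ)`.

The permanent `per (a cᵀ)` is the apolar inner product of `linProd a` and `linProd c`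
(`pairing_eq_permanent`). In particular `per (d dᵀ)` is the squared norm of
`linProd d = ∏ (y_i - y_j) ≠ 0`, hence nonzero (`pairing_self_ne_zero`). So some monomial occurs in
both `linProd a` and `linProd c`; occurring in `linProd c`, it has exponent at most
`#{e | f ∈ P e} ≤ b` at each `f`.
-/

open scoped BigOperators

section Apolar

set_option linter.unusedSectionVars false

variable {ι σ : Type*} [Fintype ι] [DecidableEq ι] [Fintype σ] [DecidableEq σ]

/-- The product of the linear forms whose coefficient vectors are the rows of `a`. -/
noncomputable def linProd (a : ι → σ → ℚ) : MvPolynomial σ ℚ :=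
  ∏ e, ∑ f, MvPolynomial.C (a e f) * MvPolynomial.X f

/-- The exponent vector of the monomial `∏ e, x_(g e)`. -/
noncomputable def content (g : ι → σ) : σ →₀ ℕ := ∑ e, Finsupp.single (g e) 1

/-- The permanent of the square matrix whose column `e'` is column `g e'` of `a`. -/
def perCols (a : ι → σ → ℚ) (g : ι → σ) : ℚ :=
  ∑ τ : Equiv.Perm ι, ∏ e, a e (g (τ e))

/-- The apolar inner product of `linProd a` and `linProd c`, expanded over the choices of one
variable from each factor of `linProd c`. -/
def pairing (a c : ι → σ → ℚ) : ℚ :=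
  ∑ g : ι → σ, (∏ e, c e (g e)) * perCols a g

lemma content_apply (g : ι → σ) (f : σ) :
    content g f = (Finset.univ.filter fun e => g e = f).card := by
  simp [content, Finsupp.finsetSum_apply, Finsupp.single_apply]

lemma exists_perm_of_content_eq {g h : ι → σ} (H : content g = content h) :
    ∃ τ : Equiv.Perm ι, g = h ∘ τ := by
  have hcard : ∀ f, Fintype.card {e // g e = f} = Fintype.card {e // h e = f} := by
    intro f
    rw [Fintype.card_subtype, Fintype.card_subtype, ← content_apply, ← content_apply, H]
  refine ⟨Equiv.ofFiberEquiv fun f => Fintype.equivOfCardEq (hcard f), ?_⟩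
  funext e
  exact (Equiv.ofFiberEquiv_map _ e).symm

lemma content_comp (g : ι → σ) (τ : Equiv.Perm ι) : content (g ∘ τ) = content g :=
  Equiv.sum_comp τ fun e => Finsupp.single (g e) 1

lemma perCols_comp (a : ι → σ → ℚ) (g : ι → σ) (τ : Equiv.Perm ι) :
    perCols a (g ∘ τ) = perCols a g :=
  Equiv.sum_comp (Equiv.mulLeft τ) fun ρ : Equiv.Perm ι => ∏ e, a e (g (ρ e))

lemma coeff_linProd (a : ι → σ → ℚ) (K : σ →₀ ℕ) :
    (linProd a).coeff K = ∑ g : ι → σ, if content g = K then ∏ e, a e (g e) else 0 := by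
  rw [linProd, Finset.prod_univ_sum, Fintype.piFinset_univ, MvPolynomial.coeff_sum]
  refine Finset.sum_congr rfl fun g _ => ?_
  have : ∏ e, (MvPolynomial.C (a e (g e)) * MvPolynomial.X (g e) : MvPolynomial σ ℚ) =
      MvPolynomial.monomial (content g) (∏ e, a e (g e)) := by
    rw [content, MvPolynomial.monomial_sum_index]
    simp [Finset.prod_mul_distrib, MvPolynomial.X]
  rw [this, MvPolynomial.coeff_monomial]

/-- Up to a positive factor, `perCols a g` is the coefficient of `linProd a` at `content g`: average
over permutations, and use that the choices with the same content as `g` are rearrangements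
of `g`. -/
lemma factorial_mul_coeff (a : ι → σ → ℚ) (g : ι → σ) :
    (Fintype.card (Equiv.Perm ι) : ℚ) * (linProd a).coeff (content g) =
      (Finset.univ.filter fun h : ι → σ => content h = content g).card * perCols a g := by
  have h1 : ∀ τ : Equiv.Perm ι, (linProd a).coeff (content g) =
      ∑ h : ι → σ, if content h = content g then ∏ e, a e (h (τ e)) else 0 := by
    intro τ
    rw [coeff_linProd, ← Equiv.sum_comp (Equiv.arrowCongr τ.symm (Equiv.refl σ))]
    refine Finset.sum_congr rfl fun h _ => ?_
    have : (Equiv.arrowCongr τ.symm (Equiv.refl σ)) h = h ∘ τ := rfl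
    rw [this, content_comp]
    rfl
  have h2 : (Fintype.card (Equiv.Perm ι) : ℚ) * (linProd a).coeff (content g) =
      ∑ τ : Equiv.Perm ι,
        ∑ h : ι → σ, if content h = content g then ∏ e, a e (h (τ e)) else 0 := by
    rw [← Finset.sum_congr rfl fun τ _ => h1 τ]
    simp
  rw [h2, Finset.sum_comm, ← nsmul_eq_mul, ← Finset.sum_const, Finset.sum_filter]
  refine Finset.sum_congr rfl fun h _ => ?_
  split_ifs with H
  · obtain ⟨τ, rfl⟩ := exists_perm_of_content_eq H
    rw [← perCols_comp a g τ]
    rfl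
  · simp

lemma coeff_ne_zero_iff (a : ι → σ → ℚ) (g : ι → σ) :
    (linProd a).coeff (content g) ≠ 0 ↔ perCols a g ≠ 0 := by
  have h := factorial_mul_coeff a g
  have h1 : (Fintype.card (Equiv.Perm ι) : ℚ) ≠ 0 := by
    exact_mod_cast Fintype.card_ne_zero
  have h2 : ((Finset.univ.filter fun h : ι → σ => content h = content g).card : ℚ) ≠ 0 := by
    have : g ∈ Finset.univ.filter fun h : ι → σ => content h = content g := by simp
    exact_mod_cast Finset.card_ne_zero_of_mem this
  constructor
  · intro hc hp
    rw [hp, mul_zero] at h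
    exact mul_ne_zero h1 hc h
  · intro hp hc
    rw [hc, mul_zero] at h
    exact mul_ne_zero h2 hp h.symm

lemma pairing_eq_permanent (a c : ι → σ → ℚ) :
    pairing a c = ∑ τ : Equiv.Perm ι, ∏ e, ∑ f, a e f * c (τ e) f := by
  simp only [pairing, perCols, Finset.mul_sum]
  rw [Finset.sum_comm]
  refine Finset.sum_congr rfl fun τ _ => ?_
  rw [Finset.prod_univ_sum, Fintype.piFinset_univ,
    ← Equiv.sum_comp (Equiv.arrowCongr τ.symm (Equiv.refl σ))
      fun g : ι → σ => ∏ e, a e (g e) * c (τ e) (g e)]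
  refine Finset.sum_congr rfl fun g _ => ?_
  rw [← Equiv.prod_comp τ, mul_comm, ← Finset.prod_mul_distrib]
  simp [Equiv.arrowCongr]

/-- The pairing of `linProd d` with itself is a sum of squares, by symmetrization. -/
lemma card_mul_pairing_self (d : ι → σ → ℚ) :
    (Fintype.card (Equiv.Perm ι) : ℚ) * pairing d d = ∑ g : ι → σ, perCols d g ^ 2 := by
  have h1 : ∀ τ : Equiv.Perm ι, pairing d d =
      ∑ g : ι → σ, (∏ e, d e (g (τ e))) * perCols d g := by
    intro τ
    rw [pairing, ← Equiv.sum_comp (Equiv.arrowCongr τ.symm (Equiv.refl σ))]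
    refine Finset.sum_congr rfl fun g _ => ?_
    have : (Equiv.arrowCongr τ.symm (Equiv.refl σ)) g = g ∘ τ := rfl
    rw [this, perCols_comp]
    rfl
  have h2 : (Fintype.card (Equiv.Perm ι) : ℚ) * pairing d d =
      ∑ τ : Equiv.Perm ι, ∑ g : ι → σ, (∏ e, d e (g (τ e))) * perCols d g := by
    rw [← Finset.sum_congr rfl fun τ _ => h1 τ]
    simp
  rw [h2, Finset.sum_comm]
  refine Finset.sum_congr rfl fun g _ => ?_
  rw [← Finset.sum_mul, sq]
  rfl

lemma pairing_self_ne_zero (d : ι → σ → ℚ) (hd : linProd d ≠ 0) : pairing d d ≠ 0 := by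
  obtain ⟨K, hK⟩ := MvPolynomial.ne_zero_iff.mp hd
  have hK' := hK
  rw [coeff_linProd] at hK'
  obtain ⟨g, -, hg⟩ := Finset.exists_ne_zero_of_sum_ne_zero hK'
  have hgK : content g = K := by
    by_contra h
    simp [h] at hg
  subst hgK
  have hp := (coeff_ne_zero_iff d g).mp hK
  intro h0
  have h := card_mul_pairing_self d
  rw [h0, mul_zero] at h
  have := (Finset.sum_eq_zero_iff_of_nonneg fun g _ => sq_nonneg (perCols d g)).mp h.symm g
    (Finset.mem_univ g)
  exact hp (pow_eq_zero_iff two_ne_zero |>.mp this)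

end Apolar

/-- Alternating signs along a walk from `u` to `v` telescope the endpoint indicators of its edges
to `δ_u - (-1)^length δ_v`. -/
lemma exists_coeff_of_walk {n : ℕ} (G : SimpleGraph (Fin n)) [DecidableRel G.Adj]
    {u v : Fin n} (p : G.Walk u v) :
    ∃ c : ↥G.edgeFinset → ℚ, (∀ f, c f ≠ 0 → f.val ∈ p.edges) ∧
      ∀ w, ∑ f : ↥G.edgeFinset, c f * (if w ∈ f.val then 1 else 0) =
        (if w = u then 1 else 0) - (-1) ^ p.length * (if w = v then 1 else 0) := by
  induction p with
  | nil => exact ⟨fun _ => 0, by simp, by simp⟩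
  | @cons u x v h p ih =>
    obtain ⟨c, hc, hs⟩ := ih
    let f₀ : ↥G.edgeFinset := ⟨s(u, x), by simpa using h⟩
    refine ⟨fun f => (if f = f₀ then 1 else 0) - c f, ?_, ?_⟩
    · intro f hf
      rw [SimpleGraph.Walk.edges_cons, List.mem_cons]
      by_cases h0 : f = f₀
      · left
        rw [h0]
      · right
        apply hc
        simpa [h0] using hf
    · intro w
      have hux : u ≠ x := h.ne
      simp only [sub_mul, Finset.sum_sub_distrib, hs]
      simp only [ite_mul, one_mul, zero_mul, Finset.sum_ite_eq', Finset.mem_univ, if_true,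
        SimpleGraph.Walk.length_cons, pow_succ, f₀, Sym2.mem_iff]
      by_cases h1 : w = u
      · subst h1
        simp only [hux, if_true, if_false, true_or]
        ring
      · simp only [h1, if_false, false_or]
        ring

lemma inf_ne_sup_of_mem {n : ℕ} (G : SimpleGraph (Fin n)) [DecidableRel G.Adj]
    (e : ↥G.edgeFinset) : Sym2.inf e.val ≠ Sym2.sup e.val := by
  obtain ⟨e, he⟩ := e
  induction e with
  | _ a b =>
    have hab : a ≠ b := (by simpa using he : G.Adj a b).ne
    simpa using hab

/-- If `G` has a path covering family `𝒫` — a family assigning to each edge `e = {i,j}`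
an even-length path `𝒫 e` joining `i` and `j` — such that every edge of `G` lies on at
most `b` of the paths (counted with multiplicity), then `G` is algebraic total weight
`(1, b+1)`-choosable: there is `K' : E → ℕ` with `Σ_e K' e = |E|`, `K' e ≤ b` for all `e`,
and the coefficient of `x^{K'}` in `P_G` nonzero. -/
theorem algebraic_choosable_of_pathCoveringFamily {n b : ℕ} (G : SimpleGraph (Fin n))
    [DecidableRel G.Adj]
    (P : (e : ↥G.edgeFinset) → G.Walk (Sym2.inf e.val) (Sym2.sup e.val))
    (hpath : ∀ e, (P e).IsPath ∧ Even (P e).length)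
    (hb : ∀ e' : ↥G.edgeFinset,
      (∑ e : ↥G.edgeFinset, if e'.val ∈ (P e).edges then 1 else 0) ≤ b) :
    ∃ K' : ↥G.edgeFinset → ℕ, (∑ e, K' e) = G.edgeFinset.card ∧ (∀ e, K' e ≤ b) ∧
      MvPolynomial.coeff (Finsupp.equivFunOnFinite.symm K') (PG G) ≠ 0 := by
  choose c hc hs using fun e => exists_coeff_of_walk G (P e)
  let d : ↥G.edgeFinset → Fin n → ℚ := fun e w =>
    (if w = Sym2.inf e.val then 1 else 0) - (if w = Sym2.sup e.val then 1 else 0)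
  let a : ↥G.edgeFinset → ↥G.edgeFinset → ℚ := fun e f =>
    (if Sym2.inf e.val ∈ f.val then 1 else 0) - (if Sym2.sup e.val ∈ f.val then 1 else 0)
  have hcd : ∀ e w, ∑ f : ↥G.edgeFinset, c e f * (if w ∈ f.val then 1 else 0) = d e w := by
    intro e w
    rw [hs, (hpath e).2.neg_one_pow, one_mul]
  have had : ∀ e f, a e f = ∑ w, d e w * (if w ∈ f.val then 1 else 0) := by
    intro e f
    simp only [a, d, sub_mul, Finset.sum_sub_distrib, ite_mul, one_mul, zero_mul,
      Finset.sum_ite_eq', Finset.mem_univ, if_true]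
  -- Adjointness of the incidence matrix: both sides are the bilinear form in `d e` and `c e'`.
  have hgram : ∀ e e', ∑ f, a e f * c e' f = ∑ w, d e w * d e' w := by
    intro e e'
    simp only [had, ← hcd e', Finset.sum_mul, Finset.mul_sum]
    rw [Finset.sum_comm]
    refine Finset.sum_congr rfl fun w _ => Finset.sum_congr rfl fun f _ => ?_
    ring
  have hd : linProd d ≠ 0 := by
    rw [linProd, Finset.prod_ne_zero_iff]
    intro e _
    have : ∑ w, MvPolynomial.C (d e w) * MvPolynomial.X w =
        (MvPolynomial.X (Sym2.inf e.val) - MvPolynomial.X (Sym2.sup e.val) :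
          MvPolynomial (Fin n) ℚ) := by
      simp [d, sub_mul, Finset.sum_sub_distrib, apply_ite MvPolynomial.C]
    rw [this, sub_ne_zero]
    exact fun h => inf_ne_sup_of_mem G e (MvPolynomial.X_injective h)
  have hpair : pairing a c ≠ 0 := by
    have : pairing a c = pairing d d := by
      rw [pairing_eq_permanent, pairing_eq_permanent]
      simp only [hgram]
    rw [this]
    exact pairing_self_ne_zero d hd
  obtain ⟨g, -, hg⟩ := Finset.exists_ne_zero_of_sum_ne_zero hpair
  have hgc : ∀ e, c e (g e) ≠ 0 := fun e =>
    Finset.prod_ne_zero_iff.mp (left_ne_zero_of_mul hg) e (Finset.mem_univ e)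
  have hcoeff := (coeff_ne_zero_iff a g).mpr (right_ne_zero_of_mul hg)
  have hPG : PG G = MvPolynomial.map (algebraMap ℚ ℂ) (linProd a) := by
    simp only [PG, linProd, map_prod, map_sum, map_mul, MvPolynomial.map_C, MvPolynomial.map_X]
    refine Finset.prod_congr rfl fun e _ => ?_
    rw [← Finset.sum_sub_distrib]
    refine Finset.sum_congr rfl fun f _ => ?_
    simp only [a]
    split_ifs <;> simp
  refine ⟨content g, ?_, ?_, ?_⟩
  · simp only [content_apply]
    rw [← Finset.card_eq_sum_card_fiberwise fun _ _ => Finset.mem_univ _]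
    simp
  · intro f
    refine le_trans ?_ (hb f)
    rw [content_apply, Finset.sum_boole, Nat.cast_id]
    refine Finset.card_le_card fun e he => ?_
    rw [Finset.mem_filter] at he ⊢
    exact ⟨Finset.mem_univ e, he.2 ▸ hc e (g e) (hgc e)⟩
  · have : Finsupp.equivFunOnFinite.symm (content g : ↥G.edgeFinset → ℕ) = content g :=
      Finsupp.equivFunOnFinite.symm_apply_apply _
    rw [this, hPG, MvPolynomial.coeff_map]
    exact (map_ne_zero _).mpr hcoeff
end
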